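/- Let B ≥ 1 and λ ∈ ℝ, and let Λ be the (B+1)×(B+1) matrix defined in the context. For every natural number m, the entries of the m-th power Λ^m are given by: (Λ^m)_{j,l} = 0 whenever j < l; (Λ^m)_{j,l} = (m choose (j−l)) · λ^{j−l} · (1−λ)^{m−(j−l)} whenever l ≤ j < B and j−l ≤ m; (Λ^m)_{j,l} = 0 whenever l ≤ j < B and j−l > m; and (Λ^m)_{B,l} = 1 − ∑_{j'=0}^{B−1} (Λ^m)_{j',l} for every l. -/

import Mathlib

open Matrix Filter

/-- The `(B+1) × (B+1)` transition matrix `Λ`: diagonal entries `1 - λ` (except the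
last one, which is `1`), subdiagonal entries `λ`, all other entries `0`. -/
def Lam (B : ℕ) (lam : ℝ) : Matrix (Fin (B+1)) (Fin (B+1)) ℝ :=
  Matrix.of fun j l =>
    if (j : ℕ) = (l : ℕ) then (if (j : ℕ) < B then 1 - lam else 1)
    else if (j : ℕ) = (l : ℕ) + 1 then lam
    else 0

/-! Only the last row of `Λ` breaks the Toeplitz pattern with symbol `(1 - λ) + λ X`, and the
other rows never see it, since they vanish in the last column. So the rows of `Λ ^ m` above the
last are those of the Toeplitz matrix with symbol `((1 - λ) + λ X) ^ m`, whose coefficients are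
given by the binomial theorem. The last row is then determined because every column of `Λ`, hence
of `Λ ^ m`, sums to `1`. -/

section MatrixPower

variable {n R : Type*} [Fintype n] [DecidableEq n] [Semiring R]

theorem pow_row_eq_of_row_eq {A A' : Matrix n n R} {s : Set n}
    (hzero : ∀ i ∈ s, ∀ k ∉ s, A i k = 0) (hrow : ∀ i ∈ s, A i = A' i) (m : ℕ) :
    ∀ i ∈ s, (A ^ m) i = (A' ^ m) i := by
  induction m with
  | zero => simp
  | succ m ih =>
    intro i hi
    ext l
    simp only [pow_succ', Matrix.mul_apply, ← hrow i hi]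
    refine Finset.sum_congr rfl fun k _ => ?_
    by_cases hk : k ∈ s
    · rw [ih k hk]
    · simp [hzero i hi k hk]

theorem vecMul_pow_eq_self {A : Matrix n n R} {v : n → R} (h : v ᵥ* A = v) (m : ℕ) :
    v ᵥ* A ^ m = v := by
  induction m with
  | zero => simp
  | succ m ih => rw [pow_succ, ← vecMul_vecMul, ih, h]

end MatrixPower

section Toeplitz

open Polynomial

variable {R : Type*} [Semiring R] (n : ℕ)

/-- The lower triangular Toeplitz matrix with symbol `p`: the matrix of left multiplication by `p`
on polynomials modulo `X ^ n`, in the monomial basis. -/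
def lowerToeplitz (p : R[X]) : Matrix (Fin n) (Fin n) R :=
  Matrix.of fun i j => if j ≤ i then p.coeff (i - j : ℕ) else 0

variable {n}

theorem lowerToeplitz_apply_eq_coeff (p : R[X]) (i j : Fin n) :
    lowerToeplitz n p i j = (p * X ^ (j : ℕ)).coeff i := by
  simp [lowerToeplitz, coeff_mul_X_pow']

theorem lowerToeplitz_one : lowerToeplitz n (1 : R[X]) = 1 := by
  ext i j
  simp [lowerToeplitz_apply_eq_coeff, coeff_X_pow, Matrix.one_apply, Fin.ext_iff]

theorem coeff_mul_eq_sum_lowerToeplitz_mul (p q : R[X]) (i : Fin n) :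
    (p * q).coeff i = ∑ k, lowerToeplitz n p i k * q.coeff k := by
  have hterm (k : ℕ) (hk : k ∈ Finset.range (i + 1)) :
      p.coeff (i - k) * q.coeff k = (p * X ^ k).coeff i * q.coeff k := by
    rw [coeff_mul_X_pow', if_pos (Finset.mem_range_succ_iff.mp hk)]
  have hzero (k : ℕ) (hk : k ∉ Finset.range (i + 1)) : (p * X ^ k).coeff i * q.coeff k = 0 := by
    rw [coeff_mul_X_pow', if_neg (mt Finset.mem_range_succ_iff.mpr hk), zero_mul]
  calc (p * q).coeff i
      = ∑ k ∈ Finset.range (i + 1), p.coeff (i - k) * q.coeff k := by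
        rw [coeff_mul, ← Finset.Nat.sum_antidiagonal_swap,
          Finset.Nat.sum_antidiagonal_eq_sum_range_succ_mk]
        rfl
    _ = ∑ k ∈ Finset.range (i + 1), (p * X ^ k).coeff i * q.coeff k :=
        Finset.sum_congr rfl hterm
    _ = ∑ k ∈ Finset.range n, (p * X ^ k).coeff i * q.coeff k :=
        Finset.sum_subset (Finset.range_subset_range.mpr i.isLt) fun k _ hk => hzero k hk
    _ = ∑ k, lowerToeplitz n p i k * q.coeff k := by
        simp only [Finset.sum_range, lowerToeplitz_apply_eq_coeff]

theorem lowerToeplitz_mul (p q : R[X]) :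
    lowerToeplitz n (p * q) = lowerToeplitz n p * lowerToeplitz n q := by
  ext i j
  simp only [Matrix.mul_apply, lowerToeplitz_apply_eq_coeff q,
    ← coeff_mul_eq_sum_lowerToeplitz_mul, ← mul_assoc, lowerToeplitz_apply_eq_coeff (p * q)]

theorem lowerToeplitz_pow (p : R[X]) (m : ℕ) :
    lowerToeplitz n (p ^ m) = lowerToeplitz n p ^ m := by
  induction m with
  | zero => simp [lowerToeplitz_one]
  | succ m ih => rw [pow_succ, pow_succ, lowerToeplitz_mul, ih]

end Toeplitz

open Polynomial in
theorem coeff_C_mul_X_add_C_pow {R : Type*} [CommSemiring R] (a b : R) (m k : ℕ) :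
    ((C a * X + C b) ^ m).coeff k = m.choose k * a ^ k * b ^ (m - k) := by
  have hcomp : (C a * X + C b) ^ m = ((X + C b) ^ m).comp (C a * X) := by simp
  rw [hcomp, comp_C_mul_X_coeff, coeff_X_add_C_pow]
  ring

section Lam

open Polynomial

variable (B : ℕ) (lam : ℝ)

theorem Lam_apply_castSucc (j : Fin (B + 1)) (k : Fin B) :
    Lam B lam j k.castSucc =
      (if j = k.castSucc then 1 - lam else 0) + if j = k.succ then lam else 0 := by
  simp only [Lam, Matrix.of_apply, Fin.ext_iff, Fin.val_castSucc, Fin.val_succ]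
  grind

theorem Lam_apply_last (j : Fin (B + 1)) :
    Lam B lam j (Fin.last B) = if j = Fin.last B then 1 else 0 := by
  simp only [Lam, Matrix.of_apply, Fin.ext_iff, Fin.val_last]
  grind

theorem one_vecMul_Lam : 1 ᵥ* Lam B lam = 1 := by
  ext l
  cases l using Fin.lastCases with
  | last => simp [vecMul, one_dotProduct, Lam_apply_last]
  | cast k => simp [vecMul, one_dotProduct, Lam_apply_castSucc, Finset.sum_add_distrib]

theorem sum_Lam_pow_apply (m : ℕ) (l : Fin (B + 1)) : ∑ j, (Lam B lam ^ m) j l = 1 := by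
  simpa [vecMul, one_dotProduct] using congrFun (vecMul_pow_eq_self (one_vecMul_Lam B lam) m) l

theorem Lam_row_eq_lowerToeplitz {j : Fin (B + 1)} (hj : (j : ℕ) < B) :
    Lam B lam j = lowerToeplitz (B + 1) (C lam * X + C (1 - lam)) j := by
  ext l
  simp only [Lam, lowerToeplitz, Matrix.of_apply, coeff_add, coeff_C_mul, coeff_X, coeff_C,
    Fin.le_def, mul_ite, mul_one, mul_zero]
  grind

theorem Lam_pow_row_eq_lowerToeplitz (m : ℕ) {j : Fin (B + 1)} (hj : (j : ℕ) < B) :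
    (Lam B lam ^ m) j = lowerToeplitz (B + 1) ((C lam * X + C (1 - lam)) ^ m) j := by
  have hlast : ∀ i : Fin (B + 1), (i : ℕ) < B → ∀ k : Fin (B + 1), ¬ (k : ℕ) < B →
      Lam B lam i k = 0 := by
    intro i hi k hk
    obtain rfl : k = Fin.last B := by grind
    rw [Lam_apply_last, if_neg (by grind)]
  rw [lowerToeplitz_pow]
  exact pow_row_eq_of_row_eq (s := {i : Fin (B + 1) | (i : ℕ) < B}) hlast
    (fun i hi => Lam_row_eq_lowerToeplitz B lam hi) m j hj

theorem Lam_pow_apply (m : ℕ) {j : Fin (B + 1)} (hj : (j : ℕ) < B) (l : Fin (B + 1)) :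
    (Lam B lam ^ m) j l =
      if l ≤ j then m.choose (j - l : ℕ) * lam ^ (j - l : ℕ) * (1 - lam) ^ (m - (j - l : ℕ))
      else 0 := by
  simp only [Lam_pow_row_eq_lowerToeplitz B lam m hj, lowerToeplitz, Matrix.of_apply,
    coeff_C_mul_X_add_C_pow]

end Lam

/-- Explicit form of the entries of the m-th power of Λ. -/
theorem entries_of_Lam_pow (B : ℕ) (hB : 1 ≤ B) (lam : ℝ) (m : ℕ) :
    (∀ j l : Fin (B+1), (j : ℕ) < (l : ℕ) → (Lam B lam ^ m) j l = 0) ∧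
    (∀ j l : Fin (B+1), (l : ℕ) ≤ (j : ℕ) → (j : ℕ) < B → (j : ℕ) - (l : ℕ) ≤ m →
      (Lam B lam ^ m) j l =
        (m.choose ((j : ℕ) - (l : ℕ)) : ℝ) * lam ^ ((j : ℕ) - (l : ℕ)) *
          (1 - lam) ^ (m - ((j : ℕ) - (l : ℕ)))) ∧
    (∀ j l : Fin (B+1), (l : ℕ) ≤ (j : ℕ) → (j : ℕ) < B → m < (j : ℕ) - (l : ℕ) →
      (Lam B lam ^ m) j l = 0) ∧
    (∀ l : Fin (B+1),
      (Lam B lam ^ m) (Fin.last B) l =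
        1 - ∑ j' : Fin B, (Lam B lam ^ m) (Fin.castSucc j') l) := by
  refine ⟨fun j l hjl => ?_, fun j l hlj hj _ => ?_, fun j l hlj hj hm => ?_, fun l => ?_⟩
  · rw [Lam_pow_apply B lam m (by omega), if_neg (not_le.mpr (Fin.lt_def.mpr hjl))]
  · rw [Lam_pow_apply B lam m hj, if_pos (Fin.le_def.mpr hlj)]
  · rw [Lam_pow_apply B lam m hj, if_pos (Fin.le_def.mpr hlj), Nat.choose_eq_zero_of_lt hm]
    simp
  · rw [← sum_Lam_pow_apply B lam m l, Fin.sum_univ_castSucc, add_sub_cancel_left]
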